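/- arXiv:2205.14208 — 2 statements merged into one kernel-verified Lean document; each statement's English description precedes it below -/
import Mathlib

section
/- (Noise-free limit theorem.) As ε → 0 from the right, the redundant-data predictive covariance converges to the nonredundant one: the map ε ↦ K_xx − [K_x1 K_x2]·(fromBlocks K_11 K_12 K_21 (K_22 + ε·Σ̄))⁻¹·[K_x1ᵀ; K_x2ᵀ] tends (in the topology of matrices over ℝ, along the filter of positive reals tending to 0) to K_xx − [K_x1 J_x2]·(fromBlocks K_11 L_12 L_12ᵀ J_22)⁻¹·[K_x1ᵀ; J_x2ᵀ]. -/
open Matrix Filter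

/-!
Redundant observations are linear combinations of the others, so if `T` is the covariance of the
nonredundant data, the redundant covariance is `[1; F] T [1 E]`. Subtracting the redundant rows and
columns turns it into `diag(T, 0)`, and the noise `ε N` into some `ε N'`. The upper left block of
`(diag(T, 0) + ε N')⁻¹` is `(T + ε S)⁻¹`, where `S` is the Schur complement of `N'`: in
`(ε N'₁₂) (ε N'₂₂)⁻¹ (ε N'₂₁)` only one factor of `ε` survives. So the noisy redundant data predict
exactly as nonredundant data of covariance `T + ε S`, and inversion is continuous at `T`.
-/

lemma fromCols_zero_mul_mul_fromRows_zero {R l m n o p q : Type*} [Semiring R] [Fintype l]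
    [Fintype m] [Fintype n] [Fintype o] (U : Matrix p l R) (P : Matrix (l ⊕ m) (n ⊕ o) R)
    (V : Matrix n q R) :
    fromCols U (0 : Matrix p m R) * P * fromRows V (0 : Matrix o q R) = U * P.toBlocks₁₁ * V := by
  rw [← fromBlocks_toBlocks P]
  simp [fromCols_mul_fromBlocks, fromCols_mul_fromRows]

lemma isUnit_fromBlocks_of_isUnit₁₁ {R m n : Type*} [CommRing R] [Fintype m] [Fintype n]
    [DecidableEq m] [DecidableEq n] {A : Matrix m m R} {B : Matrix m n R} {C : Matrix n m R}
    {D : Matrix n n R} (hA : IsUnit A) (hS : IsUnit (D - C * A⁻¹ * B)) :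
    IsUnit (fromBlocks A B C D) := by
  let := hA.invertible
  rwa [isUnit_fromBlocks_iff_of_invertible₁₁, invOf_eq_nonsing_inv]

lemma submatrix_mul_inv_submatrix_mul_submatrix {R m n p q : Type*} [CommRing R] [Fintype m]
    [Fintype n] [DecidableEq m] [DecidableEq n] (e : m ≃ n) (U : Matrix p n R)
    (M : Matrix n n R) (V : Matrix n q R) :
    U.submatrix id e * (M.submatrix e e)⁻¹ * V.submatrix e id = U * M⁻¹ * V := by
  rw [inv_submatrix_equiv, submatrix_mul_equiv, submatrix_mul_equiv, submatrix_id_id]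

section SchurComplement

variable {R n r : Type*} [CommRing R] [Fintype r] [DecidableEq r]

/-- The Schur complement of the lower right block of `M`. As `⁻¹` is the total inverse of matrices,
it is meaningful only when that block is invertible. -/
noncomputable def schurComplement (M : Matrix (n ⊕ r) (n ⊕ r) R) : Matrix n n R :=
  M.toBlocks₁₁ - M.toBlocks₁₂ * M.toBlocks₂₂⁻¹ * M.toBlocks₂₁

lemma schurComplement_smul {ε : R} (hε : IsUnit ε) {M : Matrix (n ⊕ r) (n ⊕ r) R}
    (hM : IsUnit M.toBlocks₂₂) : schurComplement (ε • M) = ε • schurComplement M := by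
  obtain ⟨u, rfl⟩ := hε
  have hinv : ((u : R) • M.toBlocks₂₂)⁻¹ = (↑u⁻¹ : R) • M.toBlocks₂₂⁻¹ :=
    inv_smul' _ u ((isUnit_iff_isUnit_det _).1 hM)
  change (u : R) • M.toBlocks₁₁ -
    (u : R) • M.toBlocks₁₂ * ((u : R) • M.toBlocks₂₂)⁻¹ * (u : R) • M.toBlocks₂₁ = _
  simp [hinv, schurComplement, smul_sub, smul_smul]

lemma schurComplement_fromBlocks_zero_add (T : Matrix n n R) (M : Matrix (n ⊕ r) (n ⊕ r) R) :
    schurComplement (fromBlocks T 0 0 0 + M) = T + schurComplement M := by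
  rw [← fromBlocks_toBlocks M, fromBlocks_add]
  simp [schurComplement, add_sub_assoc]

variable [Fintype n] [DecidableEq n]

lemma isUnit_iff_isUnit_schurComplement {M : Matrix (n ⊕ r) (n ⊕ r) R}
    (hM : IsUnit M.toBlocks₂₂) : IsUnit M ↔ IsUnit (schurComplement M) := by
  let := hM.invertible
  conv_lhs => rw [← fromBlocks_toBlocks M]
  rw [isUnit_fromBlocks_iff_of_invertible₂₂, schurComplement, invOf_eq_nonsing_inv]

lemma toBlocks₁₁_inv {M : Matrix (n ⊕ r) (n ⊕ r) R} (hM : IsUnit M.toBlocks₂₂) :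
    M⁻¹.toBlocks₁₁ = (schurComplement M)⁻¹ := by
  by_cases hS : IsUnit (schurComplement M)
  · let := hM.invertible
    let : Invertible (M.toBlocks₁₁ - M.toBlocks₁₂ * ⅟M.toBlocks₂₂ * M.toBlocks₂₁) :=
      (show IsUnit _ by rwa [invOf_eq_nonsing_inv]).invertible
    let := fromBlocks₂₂Invertible M.toBlocks₁₁ M.toBlocks₁₂ M.toBlocks₂₁ M.toBlocks₂₂
    conv_lhs => rw [← fromBlocks_toBlocks M]
    rw [← invOf_eq_nonsing_inv, invOf_fromBlocks₂₂_eq, toBlocks_fromBlocks₁₁,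
      invOf_eq_nonsing_inv, invOf_eq_nonsing_inv, schurComplement]
  · have hM' : ¬IsUnit M := (isUnit_iff_isUnit_schurComplement hM).not.2 hS
    -- Both inverses are `0`, the junk value at singular matrices.
    rw [nonsing_inv_apply_not_isUnit _ ((isUnit_iff_isUnit_det _).not.1 hS),
      nonsing_inv_apply_not_isUnit _ ((isUnit_iff_isUnit_det _).not.1 hM')]
    rfl

end SchurComplement

section Shear

variable {R n r p q : Type*} [Fintype n] [Fintype r] [DecidableEq n] [DecidableEq r]

/-- The elementary block matrix that, multiplied from the left, adds `F` times the first rows to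
the second rows. -/
def rowShear [Semiring R] (F : Matrix r n R) : Matrix (n ⊕ r) (n ⊕ r) R :=
  fromBlocks 1 0 F 1

/-- The elementary block matrix that, multiplied from the right, adds the first columns times `E`
to the second columns. -/
def colShear [Semiring R] (E : Matrix n r R) : Matrix (n ⊕ r) (n ⊕ r) R :=
  fromBlocks 1 E 0 1

lemma inv_rowShear [CommRing R] (F : Matrix r n R) : (rowShear F)⁻¹ = rowShear (-F) :=
  inv_eq_left_inv (by simp [rowShear, fromBlocks_multiply])

lemma inv_colShear [CommRing R] (E : Matrix n r R) : (colShear E)⁻¹ = colShear (-E) :=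
  inv_eq_left_inv (by simp [colShear, fromBlocks_multiply])

lemma rowShear_mul_fromRows_zero [Semiring R] (F : Matrix r n R) (V : Matrix n q R) :
    rowShear F * fromRows V (0 : Matrix r q R) = fromRows V (F * V) := by
  simp [rowShear, fromBlocks_mul_fromRows]

lemma fromCols_zero_mul_colShear [Semiring R] (U : Matrix p n R) (E : Matrix n r R) :
    fromCols U (0 : Matrix p r R) * colShear E = fromCols U (U * E) := by
  simp [colShear, fromCols_mul_fromBlocks]

end Shear

section RedundantExtension

variable {R m n r : Type*} [Semiring R] [Fintype n]

/-- The covariance obtained from the covariance `T` of nonredundant data by adjoining redundant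
data with index set `r`: linear combinations of the nonredundant ones, with the rows of `F` as
coefficients. The columns have coefficients `E` of their own; a covariance has `E = Fᵀ`. -/
def redundantExtension (F : Matrix r n R) (T : Matrix n n R) (E : Matrix n r R) :
    Matrix (n ⊕ r) (n ⊕ r) R :=
  fromBlocks T (T * E) (F * T) (F * T * E)

lemma redundantExtension_fromBlocks [Fintype m] (A : Matrix m m R) (B : Matrix m n R)
    (C : Matrix n m R) (D : Matrix n n R) (F : Matrix r m R) (E : Matrix m r R) :
    redundantExtension (fromCols F 0) (fromBlocks A B C D) (fromRows E 0) =
      (fromBlocks A (fromCols B (A * E)) (fromRows C (F * A))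
        (fromBlocks D (C * E) (F * B) (F * A * E))).submatrix
          (Equiv.sumAssoc m n r) (Equiv.sumAssoc m n r) := by
  ext ((i | i) | i) ((j | j) | j) <;>
    simp [redundantExtension, fromCols_mul_fromBlocks, fromBlocks_mul_fromRows,
      fromCols_mul_fromRows]

end RedundantExtension

section Decouple

variable {R n r p q : Type*} [Fintype n] [Fintype r] [DecidableEq n] [DecidableEq r]

/-- The covariance `M` in the coordinates where the linear combinations of the first data with
coefficients `F` have been subtracted from the second data; as in `redundantExtension`, the columns
have coefficients `E` of their own. -/
def decouple [Ring R] (F : Matrix r n R) (M : Matrix (n ⊕ r) (n ⊕ r) R) (E : Matrix n r R) :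
    Matrix (n ⊕ r) (n ⊕ r) R :=
  rowShear (-F) * M * colShear (-E)

lemma decouple_add [Ring R] (F : Matrix r n R) (M N : Matrix (n ⊕ r) (n ⊕ r) R) (E : Matrix n r R) :
    decouple F (M + N) E = decouple F M E + decouple F N E := by
  simp only [decouple, Matrix.mul_add, Matrix.add_mul]

lemma decouple_smul [CommRing R] (ε : R) (F : Matrix r n R) (M : Matrix (n ⊕ r) (n ⊕ r) R)
    (E : Matrix n r R) : decouple F (ε • M) E = ε • decouple F M E := by
  simp only [decouple, Matrix.mul_smul, Matrix.smul_mul]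

lemma decouple_redundantExtension [Ring R] (F : Matrix r n R) (T : Matrix n n R)
    (E : Matrix n r R) :
    decouple F (redundantExtension F T E) E = fromBlocks T 0 0 0 := by
  simp [decouple, redundantExtension, rowShear, colShear, fromBlocks_multiply, Matrix.mul_assoc]

lemma inv_decouple [CommRing R] (F : Matrix r n R) (M : Matrix (n ⊕ r) (n ⊕ r) R)
    (E : Matrix n r R) :
    (decouple F M E)⁻¹ = colShear E * M⁻¹ * rowShear F := by
  rw [decouple, Matrix.mul_inv_rev, Matrix.mul_inv_rev, inv_rowShear, inv_colShear, neg_neg,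
    neg_neg, Matrix.mul_assoc]

lemma fromCols_mul_inv_mul_fromRows_eq_decouple [CommRing R] (F : Matrix r n R)
    (M : Matrix (n ⊕ r) (n ⊕ r) R) (E : Matrix n r R) (U : Matrix p n R) (V : Matrix n q R) :
    fromCols U (U * E) * M⁻¹ * fromRows V (F * V) = U * (decouple F M E)⁻¹.toBlocks₁₁ * V := by
  rw [← fromCols_zero_mul_mul_fromRows_zero, inv_decouple, ← fromCols_zero_mul_colShear,
    ← rowShear_mul_fromRows_zero]
  simp only [Matrix.mul_assoc]

theorem fromCols_mul_inv_redundantExtension_add_mul_fromRows [CommRing R] (F : Matrix r n R)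
    (T : Matrix n n R) (E : Matrix n r R) {N : Matrix (n ⊕ r) (n ⊕ r) R}
    (hN : IsUnit (decouple F N E).toBlocks₂₂) (U : Matrix p n R) (V : Matrix n q R) :
    fromCols U (U * E) * (redundantExtension F T E + N)⁻¹ * fromRows V (F * V) =
      U * (T + schurComplement (decouple F N E))⁻¹ * V := by
  have hD : IsUnit (fromBlocks T 0 0 0 + decouple F N E).toBlocks₂₂ := by
    rw [← fromBlocks_toBlocks (decouple F N E), fromBlocks_add]
    simpa using hN
  rw [fromCols_mul_inv_mul_fromRows_eq_decouple, decouple_add, decouple_redundantExtension,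
    toBlocks₁₁_inv hD, schurComplement_fromBlocks_zero_add]

lemma toBlocks₂₂_decouple_submatrix_sumAssoc [Ring R] {m : Type*} [Fintype m] [DecidableEq m]
    (F : Matrix r m R) (N : Matrix (n ⊕ r) (n ⊕ r) R) (E : Matrix m r R) :
    (decouple (fromCols F 0)
      ((fromBlocks 0 0 0 N).submatrix (Equiv.sumAssoc m n r) (Equiv.sumAssoc m n r))
      (fromRows E 0)).toBlocks₂₂ = N.toBlocks₂₂ := by
  have hN : (fromBlocks 0 0 0 N).submatrix (Equiv.sumAssoc m n r) (Equiv.sumAssoc m n r) =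
      fromBlocks (fromBlocks 0 0 0 N.toBlocks₁₁) (fromRows 0 N.toBlocks₁₂)
        (fromCols 0 N.toBlocks₂₁) N.toBlocks₂₂ := by
    ext ((i | i) | i) ((j | j) | j) <;> rfl
  rw [hN]
  simp [decouple, rowShear, colShear, fromBlocks_multiply, fromCols_mul_fromRows, fromCols_neg,
    fromRows_neg, fromCols_mul_fromBlocks, fromBlocks_mul_fromRows]

end Decouple

section Limit

open scoped Topology

variable {𝕜 m n r p q : Type*} [Field 𝕜] [TopologicalSpace 𝕜] [IsTopologicalDivisionRing 𝕜]
  [Fintype m] [Fintype n] [Fintype r] [DecidableEq m] [DecidableEq n] [DecidableEq r]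

lemma tendsto_inv_add_smul {T : Matrix n n 𝕜} (hT : IsUnit T) (S : Matrix n n 𝕜) :
    Tendsto (fun ε : 𝕜 => (T + ε • S)⁻¹) (𝓝 0) (𝓝 T⁻¹) := by
  have hdet : T.det ≠ 0 := ((isUnit_iff_isUnit_det _).1 hT).ne_zero
  have hinv : ContinuousAt Inv.inv T := continuousAt_matrix_inv T <| by
    simpa only [Ring.inverse_eq_inv'] using continuousAt_inv₀ hdet
  have hadd : Tendsto (fun ε : 𝕜 => T + ε • S) (𝓝 0) (𝓝 T) :=
    Continuous.tendsto' (by fun_prop) 0 T (by simp)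
  exact hinv.tendsto.comp hadd

theorem tendsto_fromCols_mul_inv_redundantExtension_mul_fromRows {F : Matrix r n 𝕜}
    {T : Matrix n n 𝕜} {E : Matrix n r 𝕜} {N : Matrix (n ⊕ r) (n ⊕ r) 𝕜} (hT : IsUnit T)
    (hN : IsUnit (decouple F N E).toBlocks₂₂) (U : Matrix p n 𝕜) (V : Matrix n q 𝕜) :
    Tendsto
      (fun ε : 𝕜 =>
        fromCols U (U * E) * (redundantExtension F T E + ε • N)⁻¹ * fromRows V (F * V))
      (𝓝[≠] 0) (𝓝 (U * T⁻¹ * V)) := by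
  have hinv : Tendsto (fun ε : 𝕜 => (T + ε • schurComplement (decouple F N E))⁻¹)
      (𝓝[≠] 0) (𝓝 T⁻¹) := (tendsto_inv_add_smul hT _).mono_left nhdsWithin_le_nhds
  have hcont : Continuous fun M : Matrix n n 𝕜 => U * M * V := by fun_prop
  refine ((hcont.tendsto _).comp hinv).congr' ?_
  filter_upwards [self_mem_nhdsWithin] with ε hε
  have hεu : IsUnit ε := IsUnit.mk0 ε hε
  have hεN : IsUnit (decouple F (ε • N) E).toBlocks₂₂ := by
    rw [decouple_smul]
    exact hN.smul hεu.unit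
  rw [fromCols_mul_inv_redundantExtension_add_mul_fromRows F T E hεN, decouple_smul,
    schurComplement_smul hεu hN, Function.comp_apply]

theorem noise_free_limit_predictive_covariance_general (K : Matrix p q 𝕜)
    {A : Matrix m m 𝕜} {B : Matrix m n 𝕜} {C : Matrix n m 𝕜} {D : Matrix n n 𝕜}
    (F : Matrix r m 𝕜) (E : Matrix m r 𝕜) {N : Matrix (n ⊕ r) (n ⊕ r) 𝕜}
    (U₁ : Matrix p m 𝕜) (U₂ : Matrix p n 𝕜) (V₁ : Matrix m q 𝕜) (V₂ : Matrix n q 𝕜)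
    (hT : IsUnit (fromBlocks A B C D)) (hN : IsUnit N.toBlocks₂₂) :
    Tendsto
      (fun ε : 𝕜 =>
        K - fromCols U₁ (fromCols U₂ (U₁ * E)) *
          (fromBlocks A (fromCols B (A * E)) (fromRows C (F * A))
            (fromBlocks D (C * E) (F * B) (F * A * E) + ε • N))⁻¹ *
          fromRows V₁ (fromRows V₂ (F * V₁)))
      (𝓝[≠] 0) (𝓝 (K - fromCols U₁ U₂ * (fromBlocks A B C D)⁻¹ * fromRows V₁ V₂)) := by
  have hN' := hN
  rw [← toBlocks₂₂_decouple_submatrix_sumAssoc F N E] at hN'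
  refine ((tendsto_fromCols_mul_inv_redundantExtension_mul_fromRows hT hN'
    (fromCols U₁ U₂) (fromRows V₁ V₂)).const_sub K).congr fun ε => congrArg (K - ·) ?_
  let e := Equiv.sumAssoc m n r
  have hU : fromCols (fromCols U₁ U₂) (fromCols U₁ U₂ * fromRows E (0 : Matrix n r 𝕜)) =
      (fromCols U₁ (fromCols U₂ (U₁ * E))).submatrix id e := by
    ext i ((j | j) | j) <;> simp [e, fromCols_mul_fromRows]
  have hV : fromRows (fromRows V₁ V₂) (fromCols F (0 : Matrix r n 𝕜) * fromRows V₁ V₂) =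
      (fromRows V₁ (fromRows V₂ (F * V₁))).submatrix e id := by
    ext ((i | i) | i) j <;> simp [e, fromCols_mul_fromRows]
  have hadd : fromBlocks A (fromCols B (A * E)) (fromRows C (F * A))
        (fromBlocks D (C * E) (F * B) (F * A * E) + ε • N) =
      fromBlocks A (fromCols B (A * E)) (fromRows C (F * A))
        (fromBlocks D (C * E) (F * B) (F * A * E)) + ε • fromBlocks 0 0 0 N := by
    simp [fromBlocks_smul, fromBlocks_add]
  rw [hU, hV, redundantExtension_fromBlocks, hadd,
    ← submatrix_mul_inv_submatrix_mul_submatrix e]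
  rfl

end Limit

/-- Noise-free limit theorem: as `ε → 0⁺`, the redundant-data predictive covariance
converges to the nonredundant one. -/
theorem noise_free_limit_predictive_covariance
    {x y1 y2 r : Type*} [Fintype x] [Fintype y1] [Fintype y2] [Fintype r]
    [DecidableEq x] [DecidableEq y1] [DecidableEq y2] [DecidableEq r]
    [Nonempty x] [Nonempty y1] [Nonempty y2] [Nonempty r]
    (J11 : Matrix y1 y1 ℝ) (J1r : Matrix y1 r ℝ) (Jrr : Matrix r r ℝ)
    (J12 : Matrix y1 y2 ℝ) (Jr2 : Matrix r y2 ℝ) (J22 : Matrix y2 y2 ℝ)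
    (Jx1 : Matrix x y1 ℝ) (Jx2 : Matrix x y2 ℝ) (Jxr : Matrix x r ℝ)
    (Kxx : Matrix x x ℝ)
    (hJrr : Jrrᵀ = Jrr)
    (K11 : Matrix (y1 ⊕ r) (y1 ⊕ r) ℝ) (hK11 : K11 = fromBlocks J11 J1r J1rᵀ Jrr)
    (K22 : Matrix (y2 ⊕ r) (y2 ⊕ r) ℝ) (hK22 : K22 = fromBlocks J22 Jr2ᵀ Jr2 Jrr)
    (K12 : Matrix (y1 ⊕ r) (y2 ⊕ r) ℝ) (hK12 : K12 = fromBlocks J12 J1r Jr2 Jrr)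
    (Kx1 : Matrix x (y1 ⊕ r) ℝ) (hKx1 : Kx1 = fromCols Jx1 Jxr)
    (Kx2 : Matrix x (y2 ⊕ r) ℝ) (hKx2 : Kx2 = fromCols Jx2 Jxr)
    (L12 : Matrix (y1 ⊕ r) y2 ℝ) (hL12 : L12 = fromRows J12 Jr2)
    (hK11pd : K11.PosDef)
    (hz : (J22 - L12ᵀ * K11⁻¹ * L12).PosDef)
    (Sb : Matrix (y2 ⊕ r) (y2 ⊕ r) ℝ) (hSb : Sb.PosDef) :
    Tendsto
      (fun ε : ℝ =>
        Kxx - fromCols Kx1 Kx2 * (fromBlocks K11 K12 K12ᵀ (K22 + ε • Sb))⁻¹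
          * fromRows Kx1ᵀ Kx2ᵀ)
      (nhdsWithin 0 (Set.Ioi 0))
      (nhds (Kxx - fromCols Kx1 Jx2 * (fromBlocks K11 L12 L12ᵀ J22)⁻¹
        * fromRows Kx1ᵀ Jx2ᵀ)) := by
  have hT : IsUnit (fromBlocks K11 L12 L12ᵀ J22) :=
    isUnit_fromBlocks_of_isUnit₁₁ hK11pd.isUnit hz.isUnit
  have hN : IsUnit Sb.toBlocks₂₂ := (hSb.submatrix (e := Sum.inr) Sum.inr_injective).isUnit
  have hlim := (noise_free_limit_predictive_covariance_general Kxx (fromCols 0 1) (fromRows 0 1)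
    Kx1 Jx2 Kx1ᵀ Jx2ᵀ hT hN).mono_left (nhdsWithin_mono (s := Set.Ioi 0) 0 fun _ hε => ne_of_gt hε)
  subst hK11 hK22 hK12 hKx1 hKx2 hL12
  simpa [hJrr, fromBlocks_transpose, transpose_fromCols, transpose_fromRows,
    fromBlocks_mul_fromRows, fromCols_mul_fromBlocks, fromCols_mul_fromRows] using hlim
end

section
/- (First-moment formula for the updated predictive mean.) The expectation of the updated predictive mean under the data-predictive moments equals the old predictive mean: ∫ p^{(f|1+2)}(g₂) dν(g₂) = p^{(f|1)} coordinatewise. -/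
open Matrix MeasureTheory

/-! The updated predictive mean is an affine function of the new data `g₂`, so its expectation is
its value at the mean `p^{(2|1)}` of `g₂`. That value is the old predictive mean: data equal to
their own prediction have zero innovation. In matrix terms, the block matrix `Γ` sends
`(K₁₁ + Σ₁)⁻¹ (g₁ - μ₁) ⊕ 0` to `(g₁ - μ₁) ⊕ (p^{(2|1)} - μ₂)`, so the weights `Γ⁻¹ (⋯)` of the
updated mean vanish on the new data and agree with the old weights on the rest. -/

section BlockMatrix

variable {R m n : Type*} [CommRing R] [Fintype m] [Fintype n] [DecidableEq m] [DecidableEq n]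
  {A : Matrix m m R} {B : Matrix m n R} {C : Matrix n m R} {D : Matrix n n R}

theorem isUnit_fromBlocks_of_isUnit_schurComplement (hA : IsUnit A)
    (hS : IsUnit (D - C * A⁻¹ * B)) : IsUnit (fromBlocks A B C D) := by
  let := hA.invertible
  rwa [isUnit_fromBlocks_iff_of_invertible₁₁, invOf_eq_nonsing_inv]

theorem fromBlocks_inv_mulVec_sumElim (hA : IsUnit A) (hS : IsUnit (D - C * A⁻¹ * B))
    (v : m → R) :
    (fromBlocks A B C D)⁻¹ *ᵥ Sum.elim v ((C * A⁻¹) *ᵥ v) = Sum.elim (A⁻¹ *ᵥ v) 0 := by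
  let := (isUnit_fromBlocks_of_isUnit_schurComplement hA hS).invertible
  refine inv_mulVec_eq_vec ?_
  simp only [fromBlocks_mulVec, Sum.elim_comp_inl, Sum.elim_comp_inr, mulVec_zero, add_zero,
    mulVec_mulVec, mul_nonsing_inv A ((isUnit_iff_isUnit_det A).1 hA), one_mulVec]

end BlockMatrix

section PredictiveMean

variable {R a m n : Type*} [CommRing R] [Fintype m] [Fintype n] [DecidableEq m] [DecidableEq n]

/-- The predictive (posterior) mean `μx + K Γ⁻¹ (g - μ)` of a quantity with prior mean `μx`, given
data `g` with prior mean `μ`, where `Γ` is the covariance matrix of the data (noise included) and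
`K` the cross-covariance of the quantity with the data. The inverse is the matrix inverse of
Mathlib, which is `0` when `Γ` is singular. -/
noncomputable def predictiveMean (μx : a → R) (K : Matrix a n R) (Γ : Matrix n n R)
    (μ g : n → R) : a → R :=
  μx + (K * Γ⁻¹) *ᵥ (g - μ)

theorem predictiveMean_fromBlocks_predictiveMean {A : Matrix m m R} {B : Matrix m n R}
    {C : Matrix n m R} {D : Matrix n n R} (hA : IsUnit A) (hS : IsUnit (D - C * A⁻¹ * B))
    (K₁ : Matrix a m R) (K₂ : Matrix a n R) (μx : a → R) (μ₁ : m → R) (μ₂ : n → R) (g₁ : m → R) :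
    predictiveMean μx (fromCols K₁ K₂) (fromBlocks A B C D) (Sum.elim μ₁ μ₂)
        (Sum.elim g₁ (predictiveMean μ₂ C A μ₁ g₁)) =
      predictiveMean μx K₁ A μ₁ g₁ := by
  simp only [predictiveMean, ← Sum.elim_sub_sub, add_sub_cancel_left]
  rw [← mulVec_mulVec, fromBlocks_inv_mulVec_sumElim hA hS, fromCols_mulVec_sumElim, mulVec_zero,
    add_zero, mulVec_mulVec]

end PredictiveMean

section Expectation

variable {𝕜 Ω a n : Type*} [RCLike 𝕜] [Fintype n] [MeasurableSpace Ω] {P : Measure Ω}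
  {X : Ω → n → 𝕜}

theorem integrable_mulVec_apply (hX : ∀ i, Integrable (fun ω => X ω i) P) (M : Matrix a n 𝕜)
    (j : a) : Integrable (fun ω => (M *ᵥ X ω) j) P :=
  integrable_finsetSum _ fun i _ => (hX i).const_mul (M j i)

theorem integral_mulVec_apply (hX : ∀ i, Integrable (fun ω => X ω i) P) (M : Matrix a n 𝕜)
    (j : a) : ∫ ω, (M *ᵥ X ω) j ∂P = (M *ᵥ fun i => ∫ ω, X ω i ∂P) j := by
  simp only [mulVec, dotProduct]
  rw [integral_finsetSum _ fun i _ => (hX i).const_mul (M j i)]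
  simp only [integral_const_mul]

theorem integral_predictiveMean_apply [DecidableEq n] [IsProbabilityMeasure P]
    (hX : ∀ i, Integrable (fun ω => X ω i) P) (μx : a → 𝕜) (K : Matrix a n 𝕜) (Γ : Matrix n n 𝕜)
    (μ : n → 𝕜) (j : a) :
    ∫ ω, predictiveMean μx K Γ μ (X ω) j ∂P =
      predictiveMean μx K Γ μ (fun i => ∫ ω, X ω i ∂P) j := by
  have hXμ : ∀ i, Integrable (fun ω => (X ω - μ) i) P := fun i =>
    (hX i).sub (integrable_const (μ i))
  have mean_sub : (fun i => ∫ ω, (X ω - μ) i ∂P) = (fun i => ∫ ω, X ω i ∂P) - μ := by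
    ext i
    simp only [Pi.sub_apply]
    rw [integral_sub (hX i) (integrable_const _), integral_const, probReal_univ, one_smul]
  simp only [predictiveMean, Pi.add_apply]
  rw [integral_add (integrable_const _) (integrable_mulVec_apply hXμ _ j), integral_const,
    probReal_univ, one_smul, integral_mulVec_apply hXμ, mean_sub]

end Expectation

theorem expected_updated_predictive_mean_general {𝕜 Ω a b c : Type*} [RCLike 𝕜]
    [Fintype b] [Fintype c] [DecidableEq b] [DecidableEq c] [MeasurableSpace Ω]
    {P : Measure Ω} [IsProbabilityMeasure P]
    (K₁ : Matrix a b 𝕜) (K₂ : Matrix a c 𝕜)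
    {A : Matrix b b 𝕜} {B : Matrix b c 𝕜} {C : Matrix c b 𝕜} {D : Matrix c c 𝕜}
    (hA : IsUnit A) (hS : IsUnit (D - C * A⁻¹ * B))
    (μx : a → 𝕜) (μ₁ : b → 𝕜) (μ₂ : c → 𝕜) (g₁ : b → 𝕜) {g₂ : Ω → c → 𝕜}
    (hg₂ : ∀ i, Integrable (fun ω => g₂ ω i) P)
    (hmean : ∀ i, ∫ ω, g₂ ω i ∂P = predictiveMean μ₂ C A μ₁ g₁ i) (j : a) :
    ∫ ω, predictiveMean μx (fromCols K₁ K₂) (fromBlocks A B C D) (Sum.elim μ₁ μ₂)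
        (Sum.elim g₁ (g₂ ω)) j ∂P =
      predictiveMean μx K₁ A μ₁ g₁ j := by
  have data_integrable : ∀ i, Integrable (fun ω => Sum.elim g₁ (g₂ ω) i) P :=
    Sum.rec (fun i => integrable_const (g₁ i)) hg₂
  have data_mean : (fun i => ∫ ω, Sum.elim g₁ (g₂ ω) i ∂P) =
      Sum.elim g₁ (predictiveMean μ₂ C A μ₁ g₁) := by
    ext (i | i)
    · simp only [Sum.elim_inl, integral_const, probReal_univ, one_smul]
    · exact hmean i
  rw [integral_predictiveMean_apply data_integrable, data_mean,
    predictiveMean_fromBlocks_predictiveMean hA hS]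

/-- First-moment formula: the expectation of the updated predictive mean under the
data-predictive moments equals the old predictive mean, `∫ p^{(f|1+2)}(g₂) dν = p^{(f|1)}`
coordinatewise. -/
theorem expected_updated_predictive_mean
    {a b c : Type*} [Fintype a] [Fintype b] [Fintype c]
    [DecidableEq a] [DecidableEq b] [DecidableEq c]
    [Nonempty a] [Nonempty b] [Nonempty c]
    (Kx1 : Matrix a b ℝ) (Kx2 : Matrix a c ℝ)
    (K11 : Matrix b b ℝ) (K12 : Matrix b c ℝ) (K22 : Matrix c c ℝ)
    (S1 : Matrix b b ℝ) (S2 : Matrix c c ℝ)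
    (h1 : IsUnit (K11 + S1))
    (h2 : IsUnit (K22 + S2 - K12ᵀ * (K11 + S1)⁻¹ * K12))
    (Γ : Matrix (b ⊕ c) (b ⊕ c) ℝ)
    (hΓ : Γ = fromBlocks (K11 + S1) K12 K12ᵀ (K22 + S2))
    (μx : a → ℝ) (μ1 : b → ℝ) (μ2 : c → ℝ) (g1 : b → ℝ)
    (pf1 : a → ℝ)
    (hpf1 : pf1 = μx + (Kx1 * (K11 + S1)⁻¹).mulVec (g1 - μ1))
    (p21 : c → ℝ)
    (hp21 : p21 = μ2 + (K12ᵀ * (K11 + S1)⁻¹).mulVec (g1 - μ1))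
    (pf12 : (c → ℝ) → (a → ℝ))
    (hpf12 : ∀ g2, pf12 g2
      = μx + (fromCols Kx1 Kx2 * Γ⁻¹).mulVec (Sum.elim (g1 - μ1) (g2 - μ2)))
    (ν : Measure (c → ℝ)) [IsProbabilityMeasure ν]
    (hint1 : ∀ i, Integrable (fun g2 => g2 i) ν)
    (hmean : ∀ i, ∫ g2, g2 i ∂ν = p21 i) :
    ∀ j, ∫ g2, pf12 g2 j ∂ν = pf1 j := by
  subst hΓ hpf1 hp21
  intro j
  simpa only [hpf12, predictiveMean, Sum.elim_sub_sub] using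
    expected_updated_predictive_mean_general Kx1 Kx2 h1 h2 μx μ1 μ2 g1 hint1 hmean j
end
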